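/- Let 0 < α ≤ 1/100 be real, let M be a signing of K_{n,n}, and let x, y : Fin n → ℤ be vectors with all entries ±1 such that the number of pairs (i, j) with M i j ≠ x i · y j is at most 2·α·n². If s₁(M) ≤ α²·n⁴/64, then min{x⁺, x⁻, y⁺, y⁻} ≤ 3·√α·n, where x⁺, x⁻ are the numbers of +1 and −1 entries of x and y⁺, y⁻ are the numbers of +1 and −1 entries of y. That is, at least one of x and y has at least (1 − 3·√α)·n entries of the same sign. -/

import Mathlib

open Finset

/-- `M` is a signing of `K_{n,n}`: every entry is `+1` or `-1`. -/
def IsSigning (n : ℕ) (M : Fin n → Fin n → ℤ) : Prop :=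
  ∀ i j, M i j = 1 ∨ M i j = -1

/-- `s₁(M)`: the number of Type-1 switchers of `M`. -/
def type1SwitcherCount (n : ℕ) (M : Fin n → Fin n → ℤ) : ℕ :=
  (univ.filter fun p : Fin n × Fin n × Fin n × Fin n =>
    p.1 < p.2.1 ∧ p.2.2.1 < p.2.2.2 ∧
      M p.1 p.2.2.1 * M p.1 p.2.2.2 * M p.2.1 p.2.2.1 * M p.2.1 p.2.2.2 = 1 ∧
      M p.1 p.2.2.1 + M p.2.1 p.2.2.2 ≠ M p.1 p.2.2.2 + M p.2.1 p.2.2.1).card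

/-!
For sign vectors `x` and `y`, the Type-1 switchers of the rank-one signing `x i * y j` are exactly
the 2×2 submatrices whose rows have different `x`-signs and whose columns have different `y`-signs,
so there are `x⁺ * x⁻ * y⁺ * y⁻` of them. Changing one entry of a matrix destroys at most `n²`
Type-1 switchers, because a switcher through a given entry is determined by the opposite corner.
Hence `x⁺ * x⁻ * y⁺ * y⁻ ≤ s₁(M) + 2 * α * n ^ 4`. As the larger of `x⁺`, `x⁻` is at least `n / 2`,
the left side is at least `min x⁺ x⁻ * min y⁺ y⁻ * n ^ 2 / 4`, so one of these two minima is
at most `3 * √α * n`.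
-/

section

variable {ι κ : Type*} [Fintype ι] [Fintype κ]

/-- The number of entries of the rarer sign of a sign vector. -/
def minoritySignCount (x : ι → ℤ) : ℕ :=
  min #{i | x i = 1} #{i | x i = -1}

lemma minoritySignCount_mul_card_le {x : ι → ℤ} (hx : ∀ i, x i = 1 ∨ x i = -1) :
    minoritySignCount x * Fintype.card ι ≤ 2 * (#{i | x i = 1} * #{i | x i = -1}) := by
  have hcard : #{i | x i = 1} + #{i | x i = -1} = Fintype.card ι := by
    have hneg (i : ι) : x i = -1 ↔ ¬ x i = 1 := by
      rcases hx i with h | h <;> simp [h]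
    simp only [hneg, card_filter_add_card_filter_not, card_univ]
  rw [minoritySignCount, ← hcard]
  set p := #{i | x i = 1}
  set q := #{i | x i = -1}
  calc _ = min p q * (min p q + max p q) := by rw [min_add_max]
    _ ≤ min p q * (max p q + max p q) := by gcongr; exact min_le_max
    _ = _ := by rw [← two_mul, mul_left_comm, min_mul_max]

variable [LinearOrder ι] [LinearOrder κ]

/-- The Type-1 switchers `(a, c, b, d)` of a matrix indexed by finite linear orders: rows `a < c`,
columns `b < d`. For `ι = κ = Fin n` there are `type1SwitcherCount n M` of them. -/
def type1Switchers (M : ι → κ → ℤ) : Finset (ι × ι × κ × κ) :=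
  {p | p.1 < p.2.1 ∧ p.2.2.1 < p.2.2.2 ∧
    M p.1 p.2.2.1 * M p.1 p.2.2.2 * M p.2.1 p.2.2.1 * M p.2.1 p.2.2.2 = 1 ∧
    M p.1 p.2.2.1 + M p.2.1 p.2.2.2 ≠ M p.1 p.2.2.2 + M p.2.1 p.2.2.1}

/-- The unordered pairs of indices on which `x` takes different values, each encoded once as an
increasing ordered pair. -/
def discordantPairs {β : Type*} [DecidableEq β] (x : ι → β) : Finset (ι × ι) :=
  {p | p.1 < p.2 ∧ x p.1 ≠ x p.2}

lemma mem_type1Switchers {M : ι → κ → ℤ} {a c : ι} {b d : κ} :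
    (a, c, b, d) ∈ type1Switchers M ↔ a < c ∧ b < d ∧
      M a b * M a d * M c b * M c d = 1 ∧ M a b + M c d ≠ M a d + M c b := by
  simp [type1Switchers]

lemma mem_discordantPairs {β : Type*} [DecidableEq β] {x : ι → β} {i j : ι} :
    (i, j) ∈ discordantPairs x ↔ i < j ∧ x i ≠ x j := by
  simp [discordantPairs]

lemma card_discordantPairs_of_two_values {β : Type*} [DecidableEq β] {x : ι → β} {u v : β}
    (huv : u ≠ v) (hx : ∀ i, x i = u ∨ x i = v) :
    #(discordantPairs x) = #{i | x i = u} * #{i | x i = v} := by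
  rw [← card_product]
  refine card_nbij' (fun p ↦ if x p.1 = u then p else p.swap)
    (fun p ↦ (min p.1 p.2, max p.1 p.2)) ?_ ?_ ?_ ?_
  · rintro ⟨i, j⟩ hij
    have hne := (mem_discordantPairs.1 hij).2
    rcases hx i with hi | hi <;> rcases hx j with hj | hj <;> simp_all [huv.symm]
  · rintro ⟨i, j⟩ hij
    obtain ⟨hi, hj⟩ : x i = u ∧ x j = v := by simpa using hij
    have hne : i ≠ j := by rintro rfl; exact huv (hi.symm.trans hj)
    rcases hne.lt_or_gt with h | h <;>
      simp [mem_discordantPairs, h, h.le, hi, hj, huv, huv.symm]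
  · rintro ⟨i, j⟩ hij
    have hlt := (mem_discordantPairs.1 hij).1.le
    by_cases hi : x i = u <;> simp [hi, hlt]
  · rintro ⟨i, j⟩ hij
    obtain ⟨hi, hj⟩ : x i = u ∧ x j = v := by simpa using hij
    rcases le_total i j with h | h <;> simp [h, hi, hj, huv.symm]

lemma card_type1Switchers_mul {x : ι → ℤ} {y : κ → ℤ} (hx : ∀ i, x i = 1 ∨ x i = -1)
    (hy : ∀ j, y j = 1 ∨ y j = -1) :
    #(type1Switchers fun i j ↦ x i * y j) = #(discordantPairs x) * #(discordantPairs y) := by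
  rw [← card_product]
  refine card_equiv (Equiv.prodAssoc ι ι (κ × κ)).symm ?_
  rintro ⟨a, c, b, d⟩
  have hprod : x a * y b * (x a * y d) * (x c * y b) * (x c * y d) = 1 := by
    have hxsq (i : ι) : x i ^ 2 = 1 := sq_eq_one_iff.2 (hx i)
    have hysq (j : κ) : y j ^ 2 = 1 := sq_eq_one_iff.2 (hy j)
    linear_combination x c ^ 2 * y b ^ 2 * y d ^ 2 * hxsq a + y b ^ 2 * y d ^ 2 * hxsq c +
      y d ^ 2 * hysq b + hysq d
  have hsum : x a * y b + x c * y d = x a * y d + x c * y b ↔ x a = x c ∨ y b = y d := by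
    rw [← sub_eq_zero, ← sub_eq_zero (a := x a), ← sub_eq_zero (a := y b), ← mul_eq_zero]
    ring_nf
  simp only [mem_type1Switchers, hprod, ne_eq, hsum, Equiv.prodAssoc_symm_apply, mem_product,
    mem_discordantPairs]
  tauto

lemma type1Switchers_sdiff_subset_image (M N : ι → κ → ℤ) :
    type1Switchers N \ type1Switchers M ⊆
      (({p | M p.1 p.2 ≠ N p.1 p.2} : Finset (ι × κ)) ×ˢ (univ : Finset (ι × κ))).image
        fun q ↦ (min q.1.1 q.2.1, max q.1.1 q.2.1, min q.1.2 q.2.2, max q.1.2 q.2.2) := by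
  rintro ⟨a, c, b, d⟩ hp
  obtain ⟨hN, hM⟩ := mem_sdiff.1 hp
  obtain ⟨hac, hbd, -⟩ := mem_type1Switchers.1 hN
  have hcorner : M a b ≠ N a b ∨ M a d ≠ N a d ∨ M c b ≠ N c b ∨ M c d ≠ N c d := by
    by_contra! h
    obtain ⟨hab, had, hcb, hcd⟩ := h
    exact hM (by simpa only [mem_type1Switchers, hab, had, hcb, hcd] using hN)
  rw [mem_image]
  rcases hcorner with h | h | h | h
  · exact ⟨((a, b), (c, d)), by simp [h], by simp [hac.le, hbd.le]⟩
  · exact ⟨((a, d), (c, b)), by simp [h], by simp [hac.le, hbd.le]⟩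
  · exact ⟨((c, b), (a, d)), by simp [h], by simp [hac.le, hbd.le]⟩
  · exact ⟨((c, d), (a, b)), by simp [h], by simp [hac.le, hbd.le]⟩

lemma card_type1Switchers_le_add (M N : ι → κ → ℤ) :
    #(type1Switchers N) ≤ #(type1Switchers M) +
      #{p : ι × κ | M p.1 p.2 ≠ N p.1 p.2} * (Fintype.card ι * Fintype.card κ) := by
  calc #(type1Switchers N)
      ≤ #(type1Switchers N \ type1Switchers M) + #(type1Switchers M) := card_le_card_sdiff_add_card
    _ ≤ #{p : ι × κ | M p.1 p.2 ≠ N p.1 p.2} * (Fintype.card ι * Fintype.card κ) +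
          #(type1Switchers M) := by
        gcongr
        refine (card_le_card (type1Switchers_sdiff_subset_image M N)).trans
          (card_image_le.trans_eq ?_)
        rw [card_product, card_univ, Fintype.card_prod]
    _ = _ := add_comm _ _

lemma minoritySignCount_mul_le (M : ι → κ → ℤ) {x : ι → ℤ} {y : κ → ℤ}
    (hx : ∀ i, x i = 1 ∨ x i = -1) (hy : ∀ j, y j = 1 ∨ y j = -1) :
    minoritySignCount x * Fintype.card ι * (minoritySignCount y * Fintype.card κ) ≤
      4 * (#(type1Switchers M) +
        #{p : ι × κ | M p.1 p.2 ≠ x p.1 * y p.2} * (Fintype.card ι * Fintype.card κ)) := by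
  have hsign : (1 : ℤ) ≠ -1 := by decide
  calc minoritySignCount x * Fintype.card ι * (minoritySignCount y * Fintype.card κ)
      ≤ 2 * (#{i | x i = 1} * #{i | x i = -1}) * (2 * (#{j | y j = 1} * #{j | y j = -1})) :=
        Nat.mul_le_mul (minoritySignCount_mul_card_le hx) (minoritySignCount_mul_card_le hy)
    _ = 4 * #(type1Switchers fun i j ↦ x i * y j) := by
        rw [card_type1Switchers_mul hx hy, card_discordantPairs_of_two_values hsign hx,
          card_discordantPairs_of_two_values hsign hy]
        ring
    _ ≤ _ := by
        gcongr
        exact card_type1Switchers_le_add M _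

theorem one_side_almost_constant_general {α : ℝ} (hα : 0 ≤ α) (M : ι → κ → ℤ)
    {x : ι → ℤ} {y : κ → ℤ} (hx : ∀ i, x i = 1 ∨ x i = -1) (hy : ∀ j, y j = 1 ∨ y j = -1)
    (hclose : (#{p : ι × κ | M p.1 p.2 ≠ x p.1 * y p.2} : ℝ) ≤
      2 * α * (Fintype.card ι * Fintype.card κ))
    (hs1 : (#(type1Switchers M) : ℝ) ≤ α * (Fintype.card ι * Fintype.card κ) ^ 2 / 4) :
    minoritySignCount x ≤ 3 * √α * Fintype.card ι ∨
      minoritySignCount y ≤ 3 * √α * Fintype.card κ := by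
  rcases isEmpty_or_nonempty ι with _ | _
  · simp [minoritySignCount]
  rcases isEmpty_or_nonempty κ with _ | _
  · simp [minoritySignCount]
  have hm : (0 : ℝ) < Fintype.card ι := mod_cast Fintype.card_pos
  have hn : (0 : ℝ) < Fintype.card κ := mod_cast Fintype.card_pos
  have hcount : (minoritySignCount x * Fintype.card ι * (minoritySignCount y * Fintype.card κ) : ℝ)
      ≤ 4 * (#(type1Switchers M) + #{p : ι × κ | M p.1 p.2 ≠ x p.1 * y p.2} *
        (Fintype.card ι * Fintype.card κ)) := mod_cast minoritySignCount_mul_le M hx hy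
  set m : ℝ := (Fintype.card ι : ℝ)
  set n : ℝ := (Fintype.card κ : ℝ)
  by_contra! ⟨hxlarge, hylarge⟩
  refine hcount.not_gt ?_
  calc 4 * (#(type1Switchers M) + #{p : ι × κ | M p.1 p.2 ≠ x p.1 * y p.2} * (m * n))
      ≤ 4 * (α * (m * n) ^ 2 / 4 + 2 * α * (m * n) * (m * n)) := by gcongr
    _ = 3 * √α * m * m * (3 * √α * n * n) := by
        linear_combination -9 * (m * n) ^ 2 * Real.sq_sqrt hα
    _ < minoritySignCount x * m * (minoritySignCount y * n) := by gcongr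

end

theorem one_side_almost_constant (n : ℕ) (α : ℝ) (hα : 0 < α)
    (hα' : α ≤ 1 / 100) (M : Fin n → Fin n → ℤ) (hM : IsSigning n M)
    (x y : Fin n → ℤ)
    (hx : ∀ i, x i = 1 ∨ x i = -1) (hy : ∀ j, y j = 1 ∨ y j = -1)
    (hclose : (((univ ×ˢ univ).filter fun p : Fin n × Fin n =>
        M p.1 p.2 ≠ x p.1 * y p.2).card : ℝ) ≤ 2 * α * n ^ 2)
    (hs1 : (type1SwitcherCount n M : ℝ) ≤ α ^ 2 * n ^ 4 / 64) :
    min (min ((univ.filter fun i => x i = 1).card : ℝ)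
             ((univ.filter fun i => x i = -1).card : ℝ))
        (min ((univ.filter fun j => y j = 1).card : ℝ)
             ((univ.filter fun j => y j = -1).card : ℝ))
      ≤ 3 * Real.sqrt α * n := by
  have hswitchers : (#(type1Switchers M) : ℝ) ≤ α * (n * n) ^ 2 / 4 :=
    hs1.trans (by nlinarith [mul_nonneg hα.le (pow_nonneg (Nat.cast_nonneg (α := ℝ) n) 4)])
  simpa [minoritySignCount] using one_side_almost_constant_general hα.le M hx hy
    (by simpa [sq] using hclose) (by simpa using hswitchers)
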